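/- Fix (a,b) ∈ ℝ². Then there exist constants C > 0 and ν₀ > 0 such that for all 0 < ν < ν₀, | v( x_c + v_c·b·(κν)^{1/2} + a·(κν³)^{1/4}, t_c + b·(κν)^{1/2}; ν ) − v_c − (ν/κ)^{1/4}·U(a,b) | ≤ C·ν^{1/2}, where U is the Pearcey-type function. In other words, near the gradient catastrophe the Cole–Hopf solution of the Burgers equation admits the expansion v(x,t,ν) = v_c + (ν/κ)^{1/4}·U( (x̄ − v_c·t̄)/(κν³)^{1/4}, t̄/(κν)^{1/2} ) + O(ν^{1/2}) with x̄ = x − x_c, t̄ = t − t_c. -/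

import Mathlib

noncomputable section

open MeasureTheory

/-- The Pearcey integral `I(a,b) = ∫ exp(-(z⁴ - 2bz² + 4az)/8) dz`. -/
def pearceyI (a b : ℝ) : ℝ :=
  ∫ z : ℝ, Real.exp (-(z ^ 4 - 2 * b * z ^ 2 + 4 * a * z) / 8)

/-- The Pearcey-type function `U(a,b) = -2 ∂_a log I(a,b)`. -/
def pearceyU (a b : ℝ) : ℝ :=
  -2 * deriv (fun a' : ℝ => Real.log (pearceyI a' b)) a

/-!
The Cole–Hopf solution is the mean of `(x - η) / t` under the Gibbs density `exp (-G / (2ν))`. At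
the catastrophe, the phase recentred at `ξ_c` is convex, because `v₀'` is minimal there, and it is
quartic near `ξ_c` and quadratic at infinity, because `v₀` is bounded. Hence it dominates a multiple
of `min (s ^ 2) (s ^ 4)`. Put `ε = (ν / κ) ^ (1 / 4)`. Under the substitution `η = ξ_c - t_c ε z`,
the rescaled phase differs from the Pearcey phase, up to a constant, by `O(ε)` with a weight
polynomial in `z`, and it stays above `z ^ 2 - D` uniformly in `ε`, so the Gibbs mean of `z` is
`U(a, b) + O(ε)`. The speed `(x - η) / t` is `v_c + ε z (1 + O(ε)) + O(ε ^ 3)`, which costs one more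
factor `ε`: the error is `O(ε ^ 2) = O(ν ^ (1 / 2))`.
-/

open Filter Asymptotics Topology Bornology ProbabilityTheory

section Asymptotics

theorem isBigO_top_of_forall_nhds {X E F : Type*} [TopologicalSpace X] [Norm E]
    [SeminormedAddCommGroup F] {f : X → E} {g : X → F} (hnhds : ∀ x, f =O[𝓝 x] g)
    (hcocompact : f =O[cocompact X] g) : f =O[⊤] g := by
  obtain ⟨C, hC⟩ := hcocompact.bound
  obtain ⟨s, hs, hsC⟩ := hasBasis_cocompact.eventually_iff.mp hC
  have hcompact : f =O[𝓟 s] g := by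
    refine hs.induction_on (p := fun t => f =O[𝓟 t] g) (by simp)
      (fun t u htu hu => hu.mono (principal_mono.mpr htu))
      (fun t u ht hu => sup_principal (s := t) ▸ ht.sup hu) fun x _ => ?_
    obtain ⟨c, hc⟩ := (hnhds x).bound
    exact ⟨_, mem_nhdsWithin_of_mem_nhds hc, .of_bound c (mem_principal_self _)⟩
  have hcompl : f =O[𝓟 sᶜ] g := .of_bound C (eventually_principal.mpr fun x hx => hsC hx)
  simpa [sup_principal] using hcompact.sup hcompl

theorem isBigO_top_of_continuous {X : Type*} [TopologicalSpace X] {f g : X → ℝ} {x₀ : X}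
    (hf : Continuous f) (hg : Continuous g) (hg0 : ∀ x ≠ x₀, g x ≠ 0) (hx₀ : f =O[𝓝 x₀] g)
    (hcocompact : f =O[cocompact X] g) : f =O[⊤] g := by
  refine isBigO_top_of_forall_nhds (fun x => ?_) hcocompact
  rcases eq_or_ne x x₀ with rfl | hx
  · exact hx₀
  · exact (isBigO_const_of_tendsto hf.continuousAt (hg0 x hx)).trans
      ((isEquivalent_const_iff_tendsto (hg0 x hx)).mpr hg.continuousAt).isBigO_symm

theorem isBigO_div_sub_div {ι : Type*} {l : Filter ι} {N M δ : ι → ℝ} {n m : ℝ}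
    (hN : (fun i => N i - n) =O[l] δ) (hM : (fun i => M i - m) =O[l] δ)
    (hδ : Tendsto δ l (𝓝 0)) (hm : m ≠ 0) : (fun i => N i / M i - n / m) =O[l] δ := by
  have hMm : Tendsto M l (𝓝 m) := by simpa using (hM.trans_tendsto hδ).add_const m
  have hMinv : (fun i => (M i)⁻¹) =O[l] (fun _ => (1 : ℝ)) := (hMm.inv₀ hm).isBigO_one ℝ
  refine ((hN.sub (hM.const_mul_left (n / m))).mul hMinv).congr' ?_ (by simp)
  filter_upwards [hMm.eventually_ne hm] with i hi
  field_simp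
  ring

theorem isBigO_pow_succ_of_hasDerivAt {E : Type*} [NormedAddCommGroup E] [NormedSpace ℝ E]
    {f f' : ℝ → E} {n : ℕ} (hf : ∀ x, HasDerivAt f (f' x) x) (hf0 : f 0 = 0)
    (hf' : f' =O[𝓝 0] fun x => x ^ n) : f =O[𝓝 0] fun x => x ^ (n + 1) := by
  obtain ⟨C, hC, hbound⟩ := hf'.exists_nonneg
  obtain ⟨r, hr, hball⟩ := Metric.eventually_nhds_iff_ball.mp hbound.bound
  refine .of_bound C (Metric.eventually_nhds_iff_ball.mpr ⟨r, hr, fun x hx => ?_⟩)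
  have hmvt := (convex_closedBall (0 : ℝ) ‖x‖).norm_image_sub_le_of_norm_hasDerivWithin_le
    (C := C * ‖x‖ ^ n) (x := 0) (y := x) (fun y _ => (hf y).hasDerivWithinAt)
    (fun y hy => ?_) (by simp) (by simp)
  · simpa [hf0, pow_succ, mul_assoc] using hmvt
  · rw [mem_closedBall_zero_iff] at hy
    rw [mem_ball_zero_iff] at hx
    calc ‖f' y‖ ≤ C * ‖y ^ n‖ := hball y (mem_ball_zero_iff.mpr (hy.trans_lt hx))
      _ ≤ C * ‖x‖ ^ n := by rw [norm_pow]; gcongr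

theorem taylor_isBigO_univ {E : Type*} [NormedAddCommGroup E] [NormedSpace ℝ E] {f : ℝ → E}
    {x₀ : ℝ} {n : ℕ} (hf : ContDiff ℝ (n + 1) f) :
    (fun x => f x - taylorWithinEval f n Set.univ x₀ x) =O[𝓝 x₀] fun x => (x - x₀) ^ (n + 1) := by
  have hnext : (fun x => (((n + 1 : ℝ) * n.factorial)⁻¹ * (x - x₀) ^ (n + 1)) •
      iteratedDerivWithin (n + 1) f Set.univ x₀) =O[𝓝 x₀] fun x => (x - x₀) ^ (n + 1) :=
    ((isBigO_refl _ _).const_mul_left _).smul (isBigO_const_const _ one_ne_zero _) |>.congr_right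
      (by simp)
  refine ((taylor_isLittleO_univ (n := n + 1) (mod_cast hf)).isBigO.add hnext).congr_left
    fun x => ?_
  rw [taylorWithinEval_succ]
  abel

end Asymptotics

section GibbsMean

variable {α : Type*} [MeasurableSpace α] {μ : Measure α}

/-- The mean of the observable `φ` under the probability density proportional to `exp (-f)` with
respect to `μ`. It is a quotient of integrals, hence meaningful only when they converge. -/
def gibbsMean (μ : Measure α) (f φ : α → ℝ) : ℝ :=
  (∫ x, φ x * Real.exp (-f x) ∂μ) / ∫ x, Real.exp (-f x) ∂μ

theorem gibbsMean_const_add (c : ℝ) (f φ : α → ℝ) :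
    gibbsMean μ (fun x => c + f x) φ = gibbsMean μ f φ := by
  simp only [gibbsMean, neg_add, Real.exp_add, mul_left_comm _ (Real.exp (-c)),
    integral_const_mul]
  exact mul_div_mul_left _ _ (Real.exp_pos _).ne'

theorem gibbsMean_comp_add_mul (c : ℝ) {k : ℝ} (hk : k ≠ 0) (f φ : ℝ → ℝ) :
    gibbsMean volume (fun z => f (c + k * z)) (fun z => φ (c + k * z)) = gibbsMean volume f φ := by
  have hsubst (h : ℝ → ℝ) : ∫ z, h (c + k * z) = |k⁻¹| * ∫ x, h x := by
    rw [Measure.integral_comp_mul_left (fun y => h (c + y)), integral_add_left_eq_self h,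
      smul_eq_mul]
  rw [gibbsMean, hsubst (fun x => φ x * Real.exp (-f x)), hsubst (fun x => Real.exp (-f x))]
  exact mul_div_mul_left _ _ (abs_pos.mpr (inv_ne_zero hk)).ne'

theorem gibbsMean_add_mul [NeZero μ] {f φ : α → ℝ}
    (hf : Integrable (fun x => Real.exp (-f x)) μ)
    (hφ : Integrable (fun x => φ x * Real.exp (-f x)) μ) (p q : ℝ) :
    gibbsMean μ f (fun x => p + q * φ x) = p + q * gibbsMean μ f φ := by
  have hpos : ∫ x, Real.exp (-f x) ∂μ ≠ 0 := (integral_exp_pos hf).ne'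
  simp only [gibbsMean, add_mul, mul_assoc]
  rw [integral_add (hf.const_mul p) (hφ.const_mul q), integral_const_mul, integral_const_mul]
  field_simp

theorem deriv_log_integral_exp_neg_add_mul {f X : α → ℝ} (hf : Measurable f)
    (hint : ∀ a, Integrable (fun x => Real.exp (-(f x + a * X x))) μ) (a : ℝ) :
    deriv (fun a' => Real.log (∫ x, Real.exp (-(f x + a' * X x)) ∂μ)) a =
      -gibbsMean μ (fun x => f x + a * X x) X := by
  -- In the measure with density `exp (-f)`, the function to differentiate is the cumulant
  -- generating function of `-X`.
  set ρ : α → ENNReal := fun x => ENNReal.ofReal (Real.exp (-f x)) with hρ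
  have hρ_meas : Measurable ρ := by fun_prop
  have hρ_lt : ∀ᵐ x ∂μ, ρ x < ⊤ := .of_forall fun x => ENNReal.ofReal_lt_top
  have hintegral (φ : α → ℝ) (a : ℝ) : ∫ x, φ x * Real.exp (a * -X x) ∂μ.withDensity ρ =
      ∫ x, φ x * Real.exp (-(f x + a * X x)) ∂μ := by
    rw [integral_withDensity_eq_integral_toReal_smul hρ_meas hρ_lt]
    refine integral_congr_ae (.of_forall fun x => ?_)
    simp only [hρ, ENNReal.toReal_ofReal (Real.exp_pos _).le, smul_eq_mul, neg_add, Real.exp_add,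
      mul_neg]
    ring
  have hmgf (a : ℝ) : mgf (fun x => -X x) (μ.withDensity ρ) a =
      ∫ x, Real.exp (-(f x + a * X x)) ∂μ := by simpa [mgf] using hintegral (fun _ => 1) a
  have hexp (a : ℝ) : Integrable (fun x => Real.exp (a * -X x)) (μ.withDensity ρ) := by
    rw [integrable_withDensity_iff_integrable_smul' hρ_meas hρ_lt]
    refine (hint a).congr (.of_forall fun x => ?_)
    simp only [hρ, ENNReal.toReal_ofReal (Real.exp_pos _).le, smul_eq_mul, ← Real.exp_add]
    congr 1
    ring
  have hset : integrableExpSet (fun x => -X x) (μ.withDensity ρ) = Set.univ :=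
    Set.eq_univ_of_forall hexp
  have hcgf : cgf (fun x => -X x) (μ.withDensity ρ) =
      fun a => Real.log (∫ x, Real.exp (-(f x + a * X x)) ∂μ) :=
    funext fun a => congrArg Real.log (hmgf a)
  have hderiv := deriv_cgf (X := fun x => -X x) (μ := μ.withDensity ρ) (v := a) (by simp [hset])
  rw [hcgf, hmgf, hintegral] at hderiv
  simp only [hderiv, gibbsMean, ← neg_div, ← integral_neg, neg_mul]

theorem abs_exp_neg_sub_exp_neg_le {x y m : ℝ} (hx : m ≤ x) (hy : m ≤ y) :
    |Real.exp (-x) - Real.exp (-y)| ≤ |x - y| * Real.exp (-m) := by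
  have hmvt := (convex_Ici m).norm_image_sub_le_of_norm_hasDerivWithin_le
    (f := fun t => Real.exp (-t)) (C := Real.exp (-m))
    (fun t _ => (hasDerivAt_neg t).exp.hasDerivWithinAt)
    (fun t (ht : m ≤ t) => by simpa using ht) hy hx
  simpa [mul_comm] using hmvt

theorem integrable_mul_exp_neg_of_le {f m φ : α → ℝ} (hf : AEMeasurable f μ)
    (hφ : AEMeasurable φ μ) (hmf : ∀ x, m x ≤ f x)
    (hm : Integrable (fun x => φ x * Real.exp (-m x)) μ) :
    Integrable (fun x => φ x * Real.exp (-f x)) μ := by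
  refine hm.mono (by fun_prop) (.of_forall fun x => ?_)
  simp only [norm_mul, Real.norm_eq_abs, Real.abs_exp]
  gcongr
  exact hmf x

variable {ι : Type*} {l : Filter ι} {F : ι → α → ℝ} {δ : ι → ℝ} {g h m φ : α → ℝ}

theorem isBigO_integral_mul_exp_neg_sub (hF : ∀ i, AEMeasurable (F i) μ) (hg : AEMeasurable g μ)
    (hφ : AEMeasurable φ μ) (hmF : ∀ᶠ i in l, ∀ x, m x ≤ F i x) (hmg : ∀ x, m x ≤ g x)
    (hFg : ∀ᶠ i in l, ∀ x, |F i x - g x| ≤ |δ i| * h x)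
    (hφm : Integrable (fun x => φ x * Real.exp (-m x)) μ)
    (hφhm : Integrable (fun x => φ x * (h x * Real.exp (-m x))) μ) :
    (fun i => (∫ x, φ x * Real.exp (-F i x) ∂μ) - ∫ x, φ x * Real.exp (-g x) ∂μ) =O[l] δ := by
  refine .of_bound (∫ x, ‖φ x * (h x * Real.exp (-m x))‖ ∂μ) ?_
  filter_upwards [hmF, hFg] with i hmFi hFgi
  rw [← integral_sub (integrable_mul_exp_neg_of_le (hF i) hφ hmFi hφm)
    (integrable_mul_exp_neg_of_le hg hφ hmg hφm), ← integral_mul_const]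
  refine norm_integral_le_of_norm_le (hφhm.norm.mul_const _) (.of_forall fun x => ?_)
  calc ‖φ x * Real.exp (-F i x) - φ x * Real.exp (-g x)‖
      = |φ x| * |Real.exp (-F i x) - Real.exp (-g x)| := by
        rw [← mul_sub, norm_mul, Real.norm_eq_abs, Real.norm_eq_abs]
    _ ≤ |φ x| * (|F i x - g x| * Real.exp (-m x)) := by
        gcongr
        exact abs_exp_neg_sub_exp_neg_le (hmFi x) (hmg x)
    _ ≤ |φ x| * (|δ i| * |h x| * Real.exp (-m x)) := by
        gcongr
        exact (hFgi x).trans (mul_le_mul_of_nonneg_left (le_abs_self _) (abs_nonneg _))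
    _ = ‖φ x * (h x * Real.exp (-m x))‖ * ‖δ i‖ := by
        simp only [norm_mul, Real.norm_eq_abs, Real.abs_exp]
        ring

theorem isBigO_gibbsMean_sub [NeZero μ] (hF : ∀ i, AEMeasurable (F i) μ) (hg : AEMeasurable g μ)
    (hφ : AEMeasurable φ μ) (hδ : Tendsto δ l (𝓝 0)) (hmF : ∀ᶠ i in l, ∀ x, m x ≤ F i x)
    (hmg : ∀ x, m x ≤ g x) (hFg : ∀ᶠ i in l, ∀ x, |F i x - g x| ≤ |δ i| * h x)
    (hm : Integrable (fun x => Real.exp (-m x)) μ)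
    (hhm : Integrable (fun x => h x * Real.exp (-m x)) μ)
    (hφm : Integrable (fun x => φ x * Real.exp (-m x)) μ)
    (hφhm : Integrable (fun x => φ x * (h x * Real.exp (-m x))) μ) :
    (fun i => gibbsMean μ (F i) φ - gibbsMean μ g φ) =O[l] δ := by
  have hg_int : Integrable (fun x => Real.exp (-g x)) μ := by
    simpa using integrable_mul_exp_neg_of_le hg (aemeasurable_const (b := (1 : ℝ))) hmg
      (by simpa using hm)
  have hpartition := isBigO_integral_mul_exp_neg_sub hF hg (aemeasurable_const (b := (1 : ℝ)))
    hmF hmg hFg (by simpa using hm) (by simpa using hhm)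
  simp only [one_mul] at hpartition
  exact isBigO_div_sub_div (isBigO_integral_mul_exp_neg_sub hF hg hφ hmF hmg hFg hφm hφhm)
    hpartition hδ (integral_exp_pos hg_int).ne'

end GibbsMean

section QuadraticBound

theorem integrable_pow_mul_exp_neg_sq_sub (n : ℕ) (D : ℝ) :
    Integrable (fun z : ℝ => z ^ n * Real.exp (-(z ^ 2 - D))) := by
  have hgauss := integrable_rpow_mul_exp_neg_mul_sq (b := 1) one_pos (s := (n : ℝ))
    (neg_one_lt_zero.trans_le n.cast_nonneg)
  refine (hgauss.const_mul (Real.exp D)).congr (.of_forall fun z => ?_)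
  simp only [Real.rpow_natCast]
  rw [show -(z ^ 2 - D) = D + -1 * z ^ 2 by ring, Real.exp_add]
  ring

theorem integrable_pow_mul_exp_neg_of_sq_sub_le {f : ℝ → ℝ} {D : ℝ} (hf : Measurable f)
    (hD : ∀ z, z ^ 2 - D ≤ f z) (n : ℕ) : Integrable (fun z => z ^ n * Real.exp (-f z)) :=
  integrable_mul_exp_neg_of_le hf.aemeasurable (by fun_prop) hD
    (integrable_pow_mul_exp_neg_sq_sub n D)

end QuadraticBound

section Pearcey

theorem abs_pow_le_one_add_pow {m n : ℕ} (hn : Even n) (hmn : m ≤ n) (z : ℝ) :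
    |z| ^ m ≤ 1 + z ^ n := by
  rw [← hn.pow_abs z]
  rcases le_total |z| 1 with hz | hz
  · exact (pow_le_one₀ (abs_nonneg z) hz).trans (le_add_of_nonneg_right (by positivity))
  · exact (pow_le_pow_right₀ hz hmn).trans (le_add_of_nonneg_left zero_le_one)

/-- The exponent of the Pearcey integral `pearceyI a b`. -/
def pearceyPhase (a b z : ℝ) : ℝ :=
  (z ^ 4 - 2 * b * z ^ 2 + 4 * a * z) / 8

theorem exists_sq_sub_le_pearceyPhase (a b : ℝ) : ∃ D, ∀ z, z ^ 2 - D ≤ pearceyPhase a b z := by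
  refine ⟨2 * (b / 4 + 2) ^ 2 + a ^ 2 / 16, fun z => ?_⟩
  have hsquares : pearceyPhase a b z - (z ^ 2 - (2 * (b / 4 + 2) ^ 2 + a ^ 2 / 16)) =
      (z ^ 2 - 4 * (b / 4 + 2)) ^ 2 / 8 + (z + a / 4) ^ 2 := by
    unfold pearceyPhase
    ring
  linarith [sq_nonneg (z ^ 2 - 4 * (b / 4 + 2)), sq_nonneg (z + a / 4)]

@[fun_prop]
theorem measurable_pearceyPhase (a b : ℝ) : Measurable (pearceyPhase a b) := by
  unfold pearceyPhase
  fun_prop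

theorem integrable_pow_mul_exp_neg_pearceyPhase (a b : ℝ) (n : ℕ) :
    Integrable (fun z => z ^ n * Real.exp (-pearceyPhase a b z)) := by
  obtain ⟨D, hD⟩ := exists_sq_sub_le_pearceyPhase a b
  exact integrable_pow_mul_exp_neg_of_sq_sub_le (by fun_prop) hD n

theorem pearceyU_eq_gibbsMean (a b : ℝ) :
    pearceyU a b = gibbsMean volume (pearceyPhase a b) id := by
  have hphase (a : ℝ) :
      (fun z => (z ^ 4 - 2 * b * z ^ 2) / 8 + a * (z / 2)) = pearceyPhase a b := by
    funext z
    unfold pearceyPhase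
    ring
  have hpearceyI (a : ℝ) : pearceyI a b =
      ∫ z, Real.exp (-((z ^ 4 - 2 * b * z ^ 2) / 8 + a * (z / 2))) := by
    refine integral_congr_ae (.of_forall fun z => ?_)
    ring_nf
  have hint (a n) := integrable_pow_mul_exp_neg_pearceyPhase a b n
  have hderiv := deriv_log_integral_exp_neg_add_mul (μ := volume)
    (f := fun z => (z ^ 4 - 2 * b * z ^ 2) / 8) (X := fun z => z / 2) (by fun_prop)
    (fun a => by simpa [← hphase] using hint a 0) a
  have hhalf := gibbsMean_add_mul (φ := id) (by simpa using hint a 0) (by simpa using hint a 1)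
    0 2⁻¹
  simp only [pearceyU, hpearceyI, hderiv, hphase]
  rw [show (fun z : ℝ => z / 2) = fun z => 0 + 2⁻¹ * id z by funext z; simp only [id]; ring, hhalf]
  ring

/-- The quartic blow-up of a potential `ψ` at scale `δ`, perturbed by `θ` times the lower-order
terms of the Pearcey phase: for `ψ s = s ^ 4 / 8` and `θ = 1` it is `pearceyPhase a b`, whatever
`δ ≠ 0` is. -/
def pearceyBlowUp (ψ : ℝ → ℝ) (a b δ θ z : ℝ) : ℝ :=
  ψ (δ * z) / δ ^ 4 + θ * ((4 * a * z - 2 * b * z ^ 2) / 8)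

theorem measurable_pearceyBlowUp {ψ : ℝ → ℝ} (hψ : Measurable ψ) (a b δ θ : ℝ) :
    Measurable (pearceyBlowUp ψ a b δ θ) := by
  unfold pearceyBlowUp
  fun_prop

theorem abs_pearcey_lower_order_le (a b z : ℝ) :
    |(4 * a * z - 2 * b * z ^ 2) / 8| ≤ (|a| + |b|) * (1 + z ^ 2) := by
  have hz : |z| ≤ 1 + z ^ 2 := by
    simpa only [pow_one] using abs_pow_le_one_add_pow even_two one_le_two z
  calc |(4 * a * z - 2 * b * z ^ 2) / 8| = |a * z / 2 - b * z ^ 2 / 4| := by ring_nf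
    _ ≤ |a| * (|z| / 2) + |b| * (z ^ 2 / 4) := by
      refine (abs_sub _ _).trans_eq ?_
      simp only [mul_div_assoc, abs_mul, abs_div, Nat.abs_ofNat, abs_pow, sq_abs]
    _ ≤ |a| * (1 + z ^ 2) + |b| * (1 + z ^ 2) := by
      gcongr
      · linarith [abs_nonneg z]
      · linarith [sq_nonneg z]
    _ = (|a| + |b|) * (1 + z ^ 2) := by ring

variable {ψ : ℝ → ℝ}

theorem abs_blowUp_sub_quartic_le {c K : ℝ} (hψ : ∀ s, |ψ s - c * s ^ 4| ≤ K * |s| ^ 5) {δ : ℝ}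
    (hδ : δ ≠ 0) (z : ℝ) : |ψ (δ * z) / δ ^ 4 - c * z ^ 4| ≤ K * |δ| * |z| ^ 5 := by
  have hδ4 : 0 < δ ^ 4 := by positivity
  calc |ψ (δ * z) / δ ^ 4 - c * z ^ 4| = |ψ (δ * z) - c * (δ * z) ^ 4| / δ ^ 4 := by
        rw [← abs_of_pos hδ4, ← abs_div, abs_of_pos hδ4]
        field_simp
    _ ≤ K * |δ * z| ^ 5 / |δ| ^ 4 := by
        rw [Even.pow_abs (by decide) δ]
        gcongr
        exact hψ _
    _ = K * |δ| * |z| ^ 5 := by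
        rw [abs_mul]
        field_simp

theorem exists_eventually_mul_sq_sub_le_blowUp {m : ℝ} (hm : 0 < m)
    (hψ : ∀ s, m * min (s ^ 2) (s ^ 4) ≤ ψ s) (B : ℝ) :
    ∃ D, ∀ᶠ δ in 𝓝[≠] 0, ∀ z, B * z ^ 2 - D ≤ ψ (δ * z) / δ ^ 4 := by
  have hsmall : ∀ᶠ δ : ℝ in 𝓝 0, B * δ ^ 2 < m :=
    (by fun_prop : Continuous fun δ : ℝ => B * δ ^ 2).continuousAt.eventually_lt
      continuousAt_const (by simpa using hm)
  refine ⟨B ^ 2 / (4 * m), ?_⟩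
  filter_upwards [nhdsWithin_le_nhds hsmall, self_mem_nhdsWithin] with δ hδ (hδ0 : δ ≠ 0) z
  rw [le_div_iff₀ (by positivity)]
  refine le_trans ?_ (hψ (δ * z))
  rcases min_choice ((δ * z) ^ 2) ((δ * z) ^ 4) with hmin | hmin <;> rw [hmin]
  · calc (B * z ^ 2 - B ^ 2 / (4 * m)) * δ ^ 4 ≤ B * z ^ 2 * δ ^ 4 := by
          gcongr
          exact sub_le_self _ (by positivity)
      _ = B * δ ^ 2 * (δ * z) ^ 2 := by ring
      _ ≤ m * (δ * z) ^ 2 := by gcongr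
  · calc (B * z ^ 2 - B ^ 2 / (4 * m)) * δ ^ 4
        = (m * z ^ 4 - (2 * m * z ^ 2 - B) ^ 2 / (4 * m)) * δ ^ 4 := by
          field_simp
          ring
      _ ≤ m * z ^ 4 * δ ^ 4 := by
          gcongr
          exact sub_le_self _ (by positivity)
      _ = m * (δ * z) ^ 4 := by ring

variable {ι : Type*} {l : Filter ι} {δ θ : ι → ℝ}

theorem exists_eventually_sq_sub_le_pearceyBlowUp
    (hcoercive : ∃ m > 0, ∀ s, m * min (s ^ 2) (s ^ 4) ≤ ψ s)
    (hδ : Tendsto δ l (𝓝[≠] 0)) (hθ : Tendsto θ l (𝓝 1)) (a b : ℝ) :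
    ∃ D, ∀ᶠ i in l, ∀ z, z ^ 2 - D ≤ pearceyBlowUp ψ a b (δ i) (θ i) z := by
  obtain ⟨m, hm, hψ⟩ := hcoercive
  obtain ⟨D, hD⟩ := exists_eventually_mul_sq_sub_le_blowUp hm hψ (1 + 2 * (|a| + |b|))
  refine ⟨D + 2 * (|a| + |b|), ?_⟩
  filter_upwards [hδ.eventually hD, hθ.abs.eventually_lt_const (by norm_num : |(1 : ℝ)| < 2)]
    with i hDi hθi z
  have hlower : |θ i * ((4 * a * z - 2 * b * z ^ 2) / 8)| ≤ 2 * ((|a| + |b|) * (1 + z ^ 2)) := by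
    rw [abs_mul]
    gcongr
    exact abs_pearcey_lower_order_le a b z
  unfold pearceyBlowUp
  linarith [hDi z, neg_le_of_abs_le hlower]

theorem eventually_abs_pearceyBlowUp_sub_le
    (hquartic : (fun s => ψ s - 1 / 8 * s ^ 4) =O[⊤] fun s => s ^ 5)
    (hδ : Tendsto δ l (𝓝[≠] 0)) (hθ : (fun i => θ i - 1) =O[l] δ) (a b : ℝ) :
    ∃ K, ∀ᶠ i in l, ∀ z,
      |pearceyBlowUp ψ a b (δ i) (θ i) z - pearceyPhase a b z| ≤ |δ i| * (K * (1 + z ^ 6)) := by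
  obtain ⟨K, hK, hψ⟩ := hquartic.exists_nonneg
  obtain ⟨C, hC, hθC⟩ := hθ.exists_nonneg
  refine ⟨K + 2 * C * (|a| + |b|), ?_⟩
  filter_upwards [hθC.bound, hδ.eventually self_mem_nhdsWithin] with i hθi hδi z
  have hz5 : |z| ^ 5 ≤ 1 + z ^ 6 := abs_pow_le_one_add_pow (by decide) (by norm_num) z
  have hz2 : 1 + z ^ 2 ≤ 2 * (1 + z ^ 6) := by
    have hz2' := abs_pow_le_one_add_pow (m := 2) (n := 6) (by decide) (by norm_num) z
    rw [sq_abs] at hz2'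
    linarith [Even.pow_nonneg (by decide : Even 6) z]
  have hψi := abs_blowUp_sub_quartic_le (fun s => by
    simpa only [norm_pow, Real.norm_eq_abs] using eventually_top.mp hψ.bound s) hδi z
  calc |pearceyBlowUp ψ a b (δ i) (θ i) z - pearceyPhase a b z|
      = |(ψ (δ i * z) / δ i ^ 4 - 1 / 8 * z ^ 4) +
          (θ i - 1) * ((4 * a * z - 2 * b * z ^ 2) / 8)| := by
        unfold pearceyBlowUp pearceyPhase
        ring_nf
    _ ≤ K * |δ i| * |z| ^ 5 + C * |δ i| * ((|a| + |b|) * (1 + z ^ 2)) := by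
        refine (abs_add_le _ _).trans (add_le_add hψi ?_)
        rw [abs_mul]
        gcongr
        exacts [hθi, abs_pearcey_lower_order_le a b z]
    _ ≤ K * |δ i| * (1 + z ^ 6) + C * |δ i| * ((|a| + |b|) * (2 * (1 + z ^ 6))) := by gcongr
    _ = |δ i| * ((K + 2 * C * (|a| + |b|)) * (1 + z ^ 6)) := by ring

theorem isBigO_gibbsMean_pearceyBlowUp_sub_pearceyU (hψ : Measurable ψ)
    (hquartic : (fun s => ψ s - 1 / 8 * s ^ 4) =O[⊤] fun s => s ^ 5)
    (hcoercive : ∃ m > 0, ∀ s, m * min (s ^ 2) (s ^ 4) ≤ ψ s)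
    (hδ : Tendsto δ l (𝓝[≠] 0)) (hθ : (fun i => θ i - 1) =O[l] δ) (a b : ℝ) :
    (fun i => gibbsMean volume (pearceyBlowUp ψ a b (δ i) (θ i)) id - pearceyU a b) =O[l] δ := by
  have hδ0 : Tendsto δ l (𝓝 0) := hδ.mono_right nhdsWithin_le_nhds
  have hθ1 : Tendsto θ l (𝓝 1) := by simpa using (hθ.trans_tendsto hδ0).add_const 1
  obtain ⟨K, hK⟩ := eventually_abs_pearceyBlowUp_sub_le hquartic hδ hθ a b
  obtain ⟨D₁, hD₁⟩ := exists_eventually_sq_sub_le_pearceyBlowUp hcoercive hδ hθ1 a b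
  obtain ⟨D₂, hD₂⟩ := exists_sq_sub_le_pearceyPhase a b
  have hint (n : ℕ) := integrable_pow_mul_exp_neg_sq_sub n (max D₁ D₂)
  rw [pearceyU_eq_gibbsMean]
  refine isBigO_gibbsMean_sub (m := fun z => z ^ 2 - max D₁ D₂)
    (fun i => (measurable_pearceyBlowUp hψ ..).aemeasurable) (by fun_prop) aemeasurable_id hδ0
    ?_ (fun z => (sub_le_sub_left (le_max_right _ _) _).trans (hD₂ z)) hK ?_ ?_ ?_ ?_
  · filter_upwards [hD₁] with i hi z
    exact (sub_le_sub_left (le_max_left _ _) _).trans (hi z)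
  · simpa using hint 0
  · exact (((hint 0).add (hint 6)).const_mul K).congr (.of_forall fun z => by
      simp only [Pi.add_apply]; ring)
  · simpa using hint 1
  · exact (((hint 1).add (hint 7)).const_mul K).congr (.of_forall fun z => by
      simp only [Pi.add_apply, id]; ring)

end Pearcey

section CatastrophePotential

theorem pos_of_convexOn_of_eventually_pos {f : ℝ → ℝ} (hf : ConvexOn ℝ Set.univ f) (hf0 : f 0 = 0)
    (hpos : ∀ᶠ s in 𝓝[≠] 0, 0 < f s) {x : ℝ} (hx : x ≠ 0) : 0 < f x := by
  have hscale : Tendsto (fun t : ℝ => t * x) (𝓝[>] 0) (𝓝[≠] 0) := by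
    refine tendsto_nhdsWithin_iff.mpr ⟨?_, ?_⟩
    · exact tendsto_nhdsWithin_of_tendsto_nhds (by simpa using (continuous_mul_const x).tendsto 0)
    · filter_upwards [self_mem_nhdsWithin] with t (ht : 0 < t) using mul_ne_zero ht.ne' hx
  obtain ⟨t, htx, ht0, ht1⟩ := ((hscale.eventually hpos).and (Ioo_mem_nhdsGT one_pos)).exists
  have hconvex : f (t * x) ≤ t * f x := by
    simpa [hf0] using hf.2 (Set.mem_univ x) (Set.mem_univ 0) ht0.le (sub_nonneg.mpr ht1.le)
      (add_sub_cancel t 1)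
  exact pos_of_mul_pos_right (htx.trans_le hconvex) ht0.le

/-- The first-order Taylor remainder of `v₀` at `ξ`, integrated from `ξ` to `ξ + s`. Up to
rescaling, it is the Cole–Hopf phase at the catastrophe point, recentred at `ξ`. -/
def catastrophePotential (v₀ : ℝ → ℝ) (ξ s : ℝ) : ℝ :=
  ∫ u in (0 : ℝ)..s, v₀ (ξ + u) - v₀ ξ - deriv v₀ ξ * u

variable {v₀ : ℝ → ℝ} {ξ : ℝ}

@[simp]
theorem catastrophePotential_zero : catastrophePotential v₀ ξ 0 = 0 :=
  intervalIntegral.integral_same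

theorem hasDerivAt_catastrophePotential (hv₀ : Continuous v₀) (ξ s : ℝ) :
    HasDerivAt (catastrophePotential v₀ ξ) (v₀ (ξ + s) - v₀ ξ - deriv v₀ ξ * s) s := by
  have hcont : Continuous fun u => v₀ (ξ + u) - v₀ ξ - deriv v₀ ξ * u := by fun_prop
  exact intervalIntegral.integral_hasDerivAt_right (hcont.intervalIntegrable _ _)
    (hcont.stronglyMeasurableAtFilter _ _) hcont.continuousAt

theorem continuous_catastrophePotential (hv₀ : Continuous v₀) :
    Continuous (catastrophePotential v₀ ξ) :=
  continuous_iff_continuousAt.mpr fun s => (hasDerivAt_catastrophePotential hv₀ ξ s).continuousAt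

theorem convexOn_catastrophePotential (hv₀ : Differentiable ℝ v₀)
    (hmin : ∀ η, deriv v₀ ξ ≤ deriv v₀ η) : ConvexOn ℝ Set.univ (catastrophePotential v₀ ξ) := by
  have hderiv := hasDerivAt_catastrophePotential hv₀.continuous ξ
  refine Monotone.convexOn_univ_of_deriv (fun s => (hderiv s).differentiableAt) ?_
  rw [funext fun s => (hderiv s).deriv]
  have hderiv₂ (s : ℝ) : HasDerivAt (fun u => v₀ (ξ + u) - v₀ ξ - deriv v₀ ξ * u)
      (deriv v₀ (ξ + s) - deriv v₀ ξ) s := by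
    simpa using (((hv₀ (ξ + s)).hasDerivAt.comp_const_add ξ s).sub_const (v₀ ξ)).fun_sub
      ((hasDerivAt_id' s).const_mul (deriv v₀ ξ))
  refine monotone_of_deriv_nonneg (fun s => (hderiv₂ s).differentiableAt) fun s => ?_
  rw [(hderiv₂ s).deriv]
  exact sub_nonneg.mpr (hmin _)

theorem catastrophePotential_sub_quartic_isBigO_nhds (hv₀ : ContDiff ℝ 4 v₀)
    (h2nd : deriv (deriv v₀) ξ = 0) :
    (fun s => catastrophePotential v₀ ξ s - deriv (deriv (deriv v₀)) ξ / 24 * s ^ 4) =O[𝓝 0]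
      fun s => s ^ 5 := by
  have hshift : Tendsto (fun u => ξ + u) (𝓝 0) (𝓝 ξ) := by
    simpa using (continuous_const_add ξ).tendsto 0
  have htaylor := (taylor_isBigO_univ (n := 3) (x₀ := ξ) (mod_cast hv₀)).comp_tendsto hshift
  refine isBigO_pow_succ_of_hasDerivAt (f' := fun u => (v₀ (ξ + u) - v₀ ξ - deriv v₀ ξ * u) -
    deriv (deriv (deriv v₀)) ξ / 6 * u ^ 3) (fun s => ?_) (by simp) ?_
  · convert (hasDerivAt_catastrophePotential hv₀.continuous ξ s).fun_sub
      ((hasDerivAt_pow 4 s).const_mul (deriv (deriv (deriv v₀)) ξ / 24)) using 1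
    push_cast
    ring
  · refine htaylor.congr (fun u => ?_) fun u => by simp
    simp [taylorWithinEval_succ, iteratedDerivWithin_univ, iteratedDeriv_succ, h2nd,
      Nat.factorial]
    ring

theorem isEquivalent_catastrophePotential_nhds (hv₀ : ContDiff ℝ 4 v₀)
    (h2nd : deriv (deriv v₀) ξ = 0) (h3rd : deriv (deriv (deriv v₀)) ξ ≠ 0) :
    catastrophePotential v₀ ξ ~[𝓝 0] fun s => deriv (deriv (deriv v₀)) ξ / 24 * s ^ 4 :=
  (catastrophePotential_sub_quartic_isBigO_nhds hv₀ h2nd).trans_isLittleO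
    ((isLittleO_pow_pow (by norm_num)).const_mul_right (by simpa))

theorem isEquivalent_catastrophePotential_cobounded (hv₀ : Continuous v₀)
    (hbdd : ∃ M, ∀ s, |v₀ s| ≤ M) (hslope : deriv v₀ ξ ≠ 0) :
    catastrophePotential v₀ ξ ~[cobounded ℝ] fun s => -deriv v₀ ξ / 2 * s ^ 2 := by
  obtain ⟨M, hM⟩ := hbdd
  have hlinear : (fun s => catastrophePotential v₀ ξ s - -deriv v₀ ξ / 2 * s ^ 2) =O[cobounded ℝ]
      fun s => s ^ 1 := by
    refine .of_bound (M + M) (.of_forall fun s => ?_)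
    have hint : catastrophePotential v₀ ξ s - -deriv v₀ ξ / 2 * s ^ 2 =
        ∫ u in (0 : ℝ)..s, v₀ (ξ + u) - v₀ ξ := by
      rw [catastrophePotential, intervalIntegral.integral_sub
        (Continuous.intervalIntegrable (by fun_prop) _ _)
        (Continuous.intervalIntegrable (by fun_prop) _ _), intervalIntegral.integral_const_mul,
        integral_id]
      ring
    rw [hint, pow_one]
    simpa only [sub_zero, Real.norm_eq_abs] using intervalIntegral.norm_integral_le_of_norm_le_const
      (f := fun u => v₀ (ξ + u) - v₀ ξ) (a := 0) (b := s)
      fun u _ => (norm_sub_le _ _).trans (add_le_add (hM (ξ + u)) (hM ξ))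
  exact hlinear.trans_isLittleO ((isLittleO_pow_pow_cobounded_of_lt one_lt_two).const_mul_right
    (by simpa))

theorem catastrophePotential_sub_quartic_isBigO_top (hv₀ : ContDiff ℝ 4 v₀)
    (hbdd : ∃ M, ∀ s, |v₀ s| ≤ M) (hslope : deriv v₀ ξ ≠ 0) (h2nd : deriv (deriv v₀) ξ = 0) :
    (fun s => catastrophePotential v₀ ξ s - deriv (deriv (deriv v₀)) ξ / 24 * s ^ 4) =O[⊤]
      fun s => s ^ 5 := by
  refine isBigO_top_of_continuous (x₀ := 0)
    ((continuous_catastrophePotential hv₀.continuous).sub (by fun_prop)) (by fun_prop)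
    (fun s hs => pow_ne_zero 5 hs) (catastrophePotential_sub_quartic_isBigO_nhds hv₀ h2nd) ?_
  rw [← Metric.cobounded_eq_cocompact]
  have hquadratic := (isEquivalent_catastrophePotential_cobounded hv₀.continuous hbdd hslope).isBigO
  exact (hquadratic.trans ((isBigO_pow_pow_cobounded_of_le (by norm_num)).const_mul_left _)).sub
    ((isBigO_pow_pow_cobounded_of_le (by norm_num)).const_mul_left _)

theorem catastrophePotential_pos (hv₀ : ContDiff ℝ 4 v₀) (hmin : ∀ η, deriv v₀ ξ ≤ deriv v₀ η)
    (h3rd : 0 < deriv (deriv (deriv v₀)) ξ) {s : ℝ} (hs : s ≠ 0) :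
    0 < catastrophePotential v₀ ξ s := by
  have h2nd : deriv (deriv v₀) ξ = 0 := IsLocalMin.deriv_eq_zero (.of_forall hmin)
  have hnear := isEquivalent_catastrophePotential_nhds hv₀ h2nd h3rd.ne'
  refine pos_of_convexOn_of_eventually_pos
    (convexOn_catastrophePotential (hv₀.differentiable (by norm_num)) hmin)
    catastrophePotential_zero ((hnear.mono nhdsWithin_le_nhds).eventually_pos ?_) hs
  filter_upwards [self_mem_nhdsWithin] with u (hu : u ≠ 0)
  positivity

theorem min_sq_quartic_isBigO_catastrophePotential (hv₀ : ContDiff ℝ 4 v₀)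
    (hbdd : ∃ M, ∀ s, |v₀ s| ≤ M) (hslope : deriv v₀ ξ ≠ 0) (hmin : ∀ η, deriv v₀ ξ ≤ deriv v₀ η)
    (h3rd : 0 < deriv (deriv (deriv v₀)) ξ) :
    (fun s => min (s ^ 2) (s ^ 4)) =O[⊤] catastrophePotential v₀ ξ := by
  have h2nd : deriv (deriv v₀) ξ = 0 := IsLocalMin.deriv_eq_zero (.of_forall hmin)
  have hmin_norm (s : ℝ) : ‖min (s ^ 2) (s ^ 4)‖ = min (s ^ 2) (s ^ 4) :=
    Real.norm_of_nonneg (by positivity)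
  refine isBigO_top_of_continuous (x₀ := 0) (by fun_prop)
    (continuous_catastrophePotential hv₀.continuous)
    (fun s hs => (catastrophePotential_pos hv₀ hmin h3rd hs).ne') ?_ ?_
  · have hquartic : (fun s => s ^ 4) =O[𝓝 0] catastrophePotential v₀ ξ :=
      (isTheta_const_mul_left (by positivity)).mp
        (isEquivalent_catastrophePotential_nhds hv₀ h2nd h3rd.ne').isTheta_symm |>.isBigO
    exact .trans (.of_norm_le fun s => (hmin_norm s).trans_le (min_le_right _ _)) hquartic
  · rw [← Metric.cobounded_eq_cocompact]
    have hquadratic : (fun s => s ^ 2) =O[cobounded ℝ] catastrophePotential v₀ ξ :=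
      (isTheta_const_mul_left (by simpa)).mp
        (isEquivalent_catastrophePotential_cobounded hv₀.continuous hbdd hslope).isTheta_symm
        |>.isBigO
    exact .trans (.of_norm_le fun s => (hmin_norm s).trans_le (min_le_left _ _)) hquadratic

theorem exists_mul_min_le_catastrophePotential (hv₀ : ContDiff ℝ 4 v₀)
    (hbdd : ∃ M, ∀ s, |v₀ s| ≤ M) (hslope : deriv v₀ ξ ≠ 0) (hmin : ∀ η, deriv v₀ ξ ≤ deriv v₀ η)
    (h3rd : 0 < deriv (deriv (deriv v₀)) ξ) :
    ∃ m > 0, ∀ s, m * min (s ^ 2) (s ^ 4) ≤ catastrophePotential v₀ ξ s := by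
  obtain ⟨C, hC, hbound⟩ :=
    (min_sq_quartic_isBigO_catastrophePotential hv₀ hbdd hslope hmin h3rd).exists_pos
  refine ⟨C⁻¹, inv_pos.mpr hC, fun s => (inv_mul_le_iff₀ hC).mpr ?_⟩
  have hnonneg : 0 ≤ catastrophePotential v₀ ξ s := by
    rcases eq_or_ne s 0 with rfl | hs
    exacts [catastrophePotential_zero.ge, (catastrophePotential_pos hv₀ hmin h3rd hs).le]
  calc min (s ^ 2) (s ^ 4) ≤ ‖min (s ^ 2) (s ^ 4)‖ := Real.le_norm_self _
    _ ≤ C * ‖catastrophePotential v₀ ξ s‖ := eventually_top.mp hbound.bound s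
    _ = C * catastrophePotential v₀ ξ s := by rw [Real.norm_of_nonneg hnonneg]

/-- The catastrophe potential of `v₀` at `ξ`, scaled to have the leading term `s ^ 4 / 8` of the
Pearcey phase at a point where the second derivative of `v₀` vanishes and the third does not. -/
def normalizedPotential (v₀ : ℝ → ℝ) (ξ s : ℝ) : ℝ :=
  3 / deriv (deriv (deriv v₀)) ξ * catastrophePotential v₀ ξ s

theorem measurable_normalizedPotential (hv₀ : Continuous v₀) (ξ : ℝ) :
    Measurable (normalizedPotential v₀ ξ) :=
  (continuous_catastrophePotential hv₀).measurable.const_mul _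

theorem normalizedPotential_sub_quartic_isBigO_top (hv₀ : ContDiff ℝ 4 v₀)
    (hbdd : ∃ M, ∀ s, |v₀ s| ≤ M) (hslope : deriv v₀ ξ ≠ 0) (h2nd : deriv (deriv v₀) ξ = 0)
    (h3rd : deriv (deriv (deriv v₀)) ξ ≠ 0) :
    (fun s => normalizedPotential v₀ ξ s - 1 / 8 * s ^ 4) =O[⊤] fun s => s ^ 5 := by
  refine ((catastrophePotential_sub_quartic_isBigO_top hv₀ hbdd hslope h2nd).const_mul_left
    (3 / deriv (deriv (deriv v₀)) ξ)).congr_left fun s => ?_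
  unfold normalizedPotential
  field_simp
  ring

theorem exists_mul_min_le_normalizedPotential (hv₀ : ContDiff ℝ 4 v₀)
    (hbdd : ∃ M, ∀ s, |v₀ s| ≤ M) (hslope : deriv v₀ ξ ≠ 0) (hmin : ∀ η, deriv v₀ ξ ≤ deriv v₀ η)
    (h3rd : 0 < deriv (deriv (deriv v₀)) ξ) :
    ∃ m > 0, ∀ s, m * min (s ^ 2) (s ^ 4) ≤ normalizedPotential v₀ ξ s := by
  obtain ⟨m, hm, hle⟩ := exists_mul_min_le_catastrophePotential hv₀ hbdd hslope hmin h3rd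
  refine ⟨3 / deriv (deriv (deriv v₀)) ξ * m, by positivity, fun s => ?_⟩
  rw [mul_assoc]
  exact mul_le_mul_of_nonneg_left (hle s) (by positivity)

end CatastrophePotential

section ColeHopf

/-- The phase `G(η, x, t)` of the Cole–Hopf representation. -/
def coleHopfPhase (v₀ : ℝ → ℝ) (x t η : ℝ) : ℝ :=
  (∫ s in (0 : ℝ)..η, v₀ s) + (x - η) ^ 2 / (2 * t)

/-- The Cole–Hopf solution of the Burgers equation with viscosity `ν` and initial data `v₀`, as the
mean of the characteristic speed `(x - η) / t`. -/
def coleHopf (v₀ : ℝ → ℝ) (x t ν : ℝ) : ℝ :=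
  gibbsMean volume (fun η => coleHopfPhase v₀ x t η / (2 * ν)) fun η => (x - η) / t

variable {v₀ : ℝ → ℝ} {ξ τ κ : ℝ}

theorem coleHopfPhase_characteristic_add (hv₀ : Continuous v₀) (ξ y : ℝ) {t : ℝ} (ht : t ≠ 0)
    (s : ℝ) :
    coleHopfPhase v₀ (ξ + v₀ ξ * t + y) t (ξ + s) = coleHopfPhase v₀ (ξ + v₀ ξ * t + y) t ξ +
      (catastrophePotential v₀ ξ s + (deriv v₀ ξ + 1 / t) / 2 * s ^ 2 - y / t * s) := by
  have hsplit : ∫ u in (0 : ℝ)..ξ + s, v₀ u = (∫ u in (0 : ℝ)..ξ, v₀ u) + ∫ u in ξ..ξ + s, v₀ u :=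
    (intervalIntegral.integral_add_adjacent_intervals (hv₀.intervalIntegrable _ _)
      (hv₀.intervalIntegrable _ _)).symm
  have hshift : ∫ u in ξ..ξ + s, v₀ u = ∫ u in (0 : ℝ)..s, v₀ (ξ + u) := by
    simp [intervalIntegral.integral_comp_add_left]
  have hpotential : catastrophePotential v₀ ξ s =
      (∫ u in (0 : ℝ)..s, v₀ (ξ + u)) - v₀ ξ * s - deriv v₀ ξ / 2 * s ^ 2 := by
    rw [catastrophePotential, intervalIntegral.integral_sub
      (Continuous.intervalIntegrable (by fun_prop) _ _)
      (Continuous.intervalIntegrable (by fun_prop) _ _), intervalIntegral.integral_sub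
      (Continuous.intervalIntegrable (by fun_prop) _ _) intervalIntegrable_const,
      intervalIntegral.integral_const_mul, integral_id, intervalIntegral.integral_const,
      smul_eq_mul]
    ring
  simp only [coleHopfPhase, hsplit, hshift, hpotential]
  field_simp
  ring

theorem coleHopfPhase_eq_const_add_pearceyBlowUp (hv₀ : Continuous v₀) (hτ : τ = -1 / deriv v₀ ξ)
    (hκ : κ = τ ^ 4 * deriv (deriv (deriv v₀)) ξ / 6) (hτ0 : τ ≠ 0) (hκ0 : κ ≠ 0) (a b : ℝ)
    {ε t : ℝ} (hε : ε ≠ 0) (ht : t = τ + b * κ * ε ^ 2) (ht0 : t ≠ 0) (z : ℝ) :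
    coleHopfPhase v₀ (ξ + v₀ ξ * t + a * κ * ε ^ 3) t (ξ + -τ * ε * z) / (2 * (κ * ε ^ 4)) =
      coleHopfPhase v₀ (ξ + v₀ ξ * t + a * κ * ε ^ 3) t ξ / (2 * (κ * ε ^ 4)) +
        pearceyBlowUp (normalizedPotential v₀ ξ) a b (-τ * ε) (τ / t) z := by
  have hξ : deriv v₀ ξ = -1 / τ := by rw [hτ, div_div_cancel₀ (by norm_num)]
  have hξ₃ : deriv (deriv (deriv v₀)) ξ = 6 * κ / τ ^ 4 := by rw [hκ]; field_simp
  have hb : b * κ * ε ^ 2 = t - τ := by rw [ht]; ring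
  have hquadratic : (deriv v₀ ξ + 1 / t) / 2 * (-τ * ε * z) ^ 2 =
      -(b * κ * ε ^ 2) * τ / t * ε ^ 2 * z ^ 2 / 2 := by
    rw [hb, hξ]
    field_simp
    ring
  rw [coleHopfPhase_characteristic_add hv₀ ξ _ ht0, hquadratic]
  unfold pearceyBlowUp normalizedPotential
  rw [hξ₃]
  field_simp
  ring

theorem coleHopf_eq_add_gibbsMean_pearceyBlowUp (hv₀ : Continuous v₀) (hτ : τ = -1 / deriv v₀ ξ)
    (hκ : κ = τ ^ 4 * deriv (deriv (deriv v₀)) ξ / 6) (hτ0 : τ ≠ 0) (hκ0 : κ ≠ 0) (a b : ℝ)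
    {ε t D : ℝ} (hε : ε ≠ 0) (ht : t = τ + b * κ * ε ^ 2) (ht0 : t ≠ 0)
    (hD : ∀ z, z ^ 2 - D ≤ pearceyBlowUp (normalizedPotential v₀ ξ) a b (-τ * ε) (τ / t) z) :
    coleHopf v₀ (ξ + v₀ ξ * t + a * κ * ε ^ 3) t (κ * ε ^ 4) =
      v₀ ξ + a * κ * ε ^ 3 / t + τ / t * ε *
        gibbsMean volume (pearceyBlowUp (normalizedPotential v₀ ξ) a b (-τ * ε) (τ / t)) id := by
  have hint (n : ℕ) := integrable_pow_mul_exp_neg_of_sq_sub_le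
    (measurable_pearceyBlowUp (measurable_normalizedPotential hv₀ ξ) a b _ _) hD n
  have hspeed (z : ℝ) : (ξ + v₀ ξ * t + a * κ * ε ^ 3 - (ξ + -τ * ε * z)) / t =
      v₀ ξ + a * κ * ε ^ 3 / t + τ / t * ε * id z := by
    simp only [id]
    field_simp
    ring
  rw [coleHopf, ← gibbsMean_comp_add_mul ξ (mul_ne_zero (neg_ne_zero.mpr hτ0) hε)]
  simp only [coleHopfPhase_eq_const_add_pearceyBlowUp hv₀ hτ hκ hτ0 hκ0 a b hε ht ht0, hspeed]
  rw [gibbsMean_const_add, gibbsMean_add_mul (by simpa using hint 0) (by simpa using hint 1)]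

theorem tendsto_neg_mul_nhdsNE_zero (hτ : τ ≠ 0) :
    Tendsto (fun ε => -τ * ε) (𝓝[≠] 0) (𝓝[≠] 0) := by
  simpa using ((hasDerivAt_id' (0 : ℝ)).const_mul (-τ)).tendsto_nhdsNE (by simpa)

theorem tendsto_add_mul_sq_nhds_zero (τ c : ℝ) :
    Tendsto (fun ε : ℝ => τ + c * ε ^ 2) (𝓝 0) (𝓝 τ) := by
  simpa using (by fun_prop : Continuous fun ε : ℝ => τ + c * ε ^ 2).tendsto 0

theorem isBigO_div_add_mul_sq_sub_one (hτ : τ ≠ 0) (c : ℝ) :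
    (fun ε => τ / (τ + c * ε ^ 2) - 1) =O[𝓝 0] fun ε => ε := by
  have hden : (fun ε => τ + c * ε ^ 2 - τ) =O[𝓝 0] fun ε => ε := by
    simpa using ((isLittleO_pow_id one_lt_two).isBigO.const_mul_left c)
  simpa [hτ] using isBigO_div_sub_div (n := τ) (N := fun _ => τ)
    ((isBigO_zero _ _).congr_left fun _ => (sub_self τ).symm) hden tendsto_id hτ

theorem isBigO_mul_cube_div_add_mul_sq (hτ : τ ≠ 0) (k c : ℝ) :
    (fun ε => k * ε ^ 3 / (τ + c * ε ^ 2)) =O[𝓝 0] fun ε => ε ^ 2 := by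
  have hcube : (fun ε => k * ε ^ 3) =O[𝓝 0] fun ε => ε ^ 2 :=
    (isLittleO_pow_pow (by norm_num)).isBigO.const_mul_left k
  have hinv := ((tendsto_add_mul_sq_nhds_zero τ c).inv₀ hτ).isBigO_one ℝ
  simpa only [div_eq_mul_inv, mul_one] using hcube.mul hinv

theorem isBigO_gibbsMean_normalizedPotential_sub_pearceyU (hv₀ : ContDiff ℝ 4 v₀)
    (hbdd : ∃ M, ∀ s, |v₀ s| ≤ M) (hslope : deriv v₀ ξ ≠ 0) (hmin : ∀ η, deriv v₀ ξ ≤ deriv v₀ η)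
    (h3rd : 0 < deriv (deriv (deriv v₀)) ξ) (hτ : τ ≠ 0) (a b c : ℝ) :
    (fun ε => gibbsMean volume (pearceyBlowUp (normalizedPotential v₀ ξ) a b (-τ * ε)
      (τ / (τ + c * ε ^ 2))) id - pearceyU a b) =O[𝓝[≠] 0] fun ε => ε := by
  have h2nd : deriv (deriv v₀) ξ = 0 := IsLocalMin.deriv_eq_zero (.of_forall hmin)
  have hscale : (fun ε => -τ * ε) =Θ[𝓝[≠] 0] fun ε => ε :=
    (isTheta_const_mul_left (neg_ne_zero.mpr hτ)).mpr isTheta_rfl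
  have hθ : (fun ε => τ / (τ + c * ε ^ 2) - 1) =O[𝓝[≠] 0] fun ε => ε :=
    (isBigO_div_add_mul_sq_sub_one hτ c).mono nhdsWithin_le_nhds
  exact (isBigO_gibbsMean_pearceyBlowUp_sub_pearceyU
    (measurable_normalizedPotential hv₀.continuous ξ)
    (normalizedPotential_sub_quartic_isBigO_top hv₀ hbdd hslope h2nd h3rd.ne')
    (exists_mul_min_le_normalizedPotential hv₀ hbdd hslope hmin h3rd)
    (tendsto_neg_mul_nhdsNE_zero hτ) (hθ.trans hscale.isBigO_symm) a b).trans hscale.isBigO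

theorem eventually_coleHopf_eq (hv₀ : ContDiff ℝ 4 v₀) (hbdd : ∃ M, ∀ s, |v₀ s| ≤ M)
    (hslope : deriv v₀ ξ ≠ 0) (hmin : ∀ η, deriv v₀ ξ ≤ deriv v₀ η)
    (h3rd : 0 < deriv (deriv (deriv v₀)) ξ) (hτ : τ = -1 / deriv v₀ ξ)
    (hκ : κ = τ ^ 4 * deriv (deriv (deriv v₀)) ξ / 6) (a b : ℝ) :
    ∀ᶠ ε in 𝓝[≠] 0, coleHopf v₀ (ξ + v₀ ξ * (τ + b * κ * ε ^ 2) + a * κ * ε ^ 3)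
      (τ + b * κ * ε ^ 2) (κ * ε ^ 4) =
        v₀ ξ + a * κ * ε ^ 3 / (τ + b * κ * ε ^ 2) + τ / (τ + b * κ * ε ^ 2) * ε *
          gibbsMean volume (pearceyBlowUp (normalizedPotential v₀ ξ) a b (-τ * ε)
            (τ / (τ + b * κ * ε ^ 2))) id := by
  have hτ0 : τ ≠ 0 := hτ ▸ div_ne_zero (by norm_num) hslope
  have hκ0 : κ ≠ 0 := hκ ▸ by positivity
  have ht : Tendsto (fun ε => τ + b * κ * ε ^ 2) (𝓝[≠] 0) (𝓝 τ) :=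
    (tendsto_add_mul_sq_nhds_zero τ (b * κ)).mono_left nhdsWithin_le_nhds
  have hθ : Tendsto (fun ε => τ / (τ + b * κ * ε ^ 2)) (𝓝[≠] 0) (𝓝 1) := by
    simpa [hτ0, Pi.div_def] using (tendsto_const_nhds (x := τ)).div ht hτ0
  obtain ⟨D, hD⟩ := exists_eventually_sq_sub_le_pearceyBlowUp
    (exists_mul_min_le_normalizedPotential hv₀ hbdd hslope hmin h3rd)
    (tendsto_neg_mul_nhdsNE_zero hτ0) hθ a b
  filter_upwards [hD, ht.eventually_ne hτ0, self_mem_nhdsWithin] with ε hDε htε hε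
  exact coleHopf_eq_add_gibbsMean_pearceyBlowUp hv₀.continuous hτ hκ hτ0 hκ0 a b hε rfl htε hDε

theorem isBigO_coleHopf_sub_pearceyU (hv₀ : ContDiff ℝ 4 v₀) (hbdd : ∃ M, ∀ s, |v₀ s| ≤ M)
    (hslope : deriv v₀ ξ ≠ 0) (hmin : ∀ η, deriv v₀ ξ ≤ deriv v₀ η)
    (h3rd : 0 < deriv (deriv (deriv v₀)) ξ) (hτ : τ = -1 / deriv v₀ ξ)
    (hκ : κ = τ ^ 4 * deriv (deriv (deriv v₀)) ξ / 6) (a b : ℝ) :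
    (fun ε => coleHopf v₀ (ξ + v₀ ξ * (τ + b * κ * ε ^ 2) + a * κ * ε ^ 3)
      (τ + b * κ * ε ^ 2) (κ * ε ^ 4) - v₀ ξ - ε * pearceyU a b) =O[𝓝[≠] 0] fun ε => ε ^ 2 := by
  have hτ0 : τ ≠ 0 := hτ ▸ div_ne_zero (by norm_num) hslope
  set R : ℝ → ℝ := fun ε => gibbsMean volume (pearceyBlowUp (normalizedPotential v₀ ξ) a b
    (-τ * ε) (τ / (τ + b * κ * ε ^ 2))) id with hR
  have hRU : (fun ε => R ε - pearceyU a b) =O[𝓝[≠] 0] fun ε => ε :=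
    isBigO_gibbsMean_normalizedPotential_sub_pearceyU hv₀ hbdd hslope hmin h3rd hτ0 a b (b * κ)
  have hid : Tendsto (fun ε : ℝ => ε) (𝓝[≠] 0) (𝓝 0) := nhdsWithin_le_nhds
  have hR_one : R =O[𝓝[≠] 0] fun _ => (1 : ℝ) :=
    Tendsto.isBigO_one ℝ (by simpa using (hRU.trans_tendsto hid).add_const (pearceyU a b))
  have hy : (fun ε => a * κ * ε ^ 3 / (τ + b * κ * ε ^ 2)) =O[𝓝[≠] 0] fun ε => ε ^ 2 :=
    (isBigO_mul_cube_div_add_mul_sq hτ0 (a * κ) (b * κ)).mono nhdsWithin_le_nhds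
  have hθ : (fun ε => τ / (τ + b * κ * ε ^ 2) - 1) =O[𝓝[≠] 0] fun ε => ε :=
    (isBigO_div_add_mul_sq_sub_one hτ0 (b * κ)).mono nhdsWithin_le_nhds
  have hprefactor : (fun ε => (τ / (τ + b * κ * ε ^ 2) - 1) * ε * R ε) =O[𝓝[≠] 0]
      fun ε => ε ^ 2 :=
    ((hθ.mul (isBigO_refl _ _)).mul hR_one).congr_right fun ε => by ring
  have hmean : (fun ε => ε * (R ε - pearceyU a b)) =O[𝓝[≠] 0] fun ε => ε ^ 2 :=
    ((isBigO_refl _ _).mul hRU).congr_right fun ε => by ring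
  refine ((hy.add hprefactor).add hmean).congr' ?_ .rfl
  filter_upwards [eventually_coleHopf_eq hv₀ hbdd hslope hmin h3rd hτ hκ a b] with ε hε
  rw [hε, hR]
  ring

theorem exists_pos_forall_abs_le_of_isBigO_nhdsGT {f g : ℝ → ℝ} (hfg : f =O[𝓝[>] 0] g)
    (hg : ∀ x, 0 ≤ g x) : ∃ C > 0, ∃ r > 0, ∀ x, 0 < x → x < r → |f x| ≤ C * g x := by
  obtain ⟨C, hC, hbound⟩ := hfg.exists_pos
  obtain ⟨r, hr, hIoo⟩ := mem_nhdsGT_iff_exists_Ioo_subset.mp hbound.bound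
  refine ⟨C, hC, r, hr, fun x hx hxr => ?_⟩
  simpa only [Set.mem_ofPred_eq, Real.norm_eq_abs, abs_of_nonneg (hg x)] using hIoo ⟨hx, hxr⟩

theorem tendsto_div_rpow_nhdsGT_zero {p : ℝ} (hκ : 0 < κ) (hp : 0 < p) :
    Tendsto (fun ν => (ν / κ) ^ p) (𝓝[>] 0) (𝓝[>] 0) := by
  refine tendsto_nhdsWithin_iff.mpr ⟨tendsto_nhdsWithin_of_tendsto_nhds ?_, ?_⟩
  · have hcont : Continuous fun ν : ℝ => (ν / κ) ^ p :=
      (continuous_id.div_const κ).rpow_const fun _ => .inr hp.le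
    simpa [hp.ne'] using hcont.tendsto 0
  · filter_upwards [self_mem_nhdsWithin] with ν (hν : 0 < ν)
    exact Real.rpow_pos_of_pos (div_pos hν hκ) p

theorem rpow_one_fourth_pow_four {x : ℝ} (hx : 0 ≤ x) : (x ^ ((1 : ℝ) / 4)) ^ 4 = x := by
  rw [← Real.rpow_mul_natCast hx]
  norm_num

theorem rpow_one_fourth_sq {x : ℝ} (hx : 0 ≤ x) : (x ^ ((1 : ℝ) / 4)) ^ 2 = √x := by
  rw [← Real.rpow_mul_natCast hx, Real.sqrt_eq_rpow]
  norm_num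

theorem pow_four_rpow_one_fourth {x : ℝ} (hx : 0 ≤ x) : (x ^ 4) ^ ((1 : ℝ) / 4) = x := by
  rw [← Real.rpow_natCast_mul hx]
  norm_num

theorem isBigO_coleHopf_sub_pearceyU_sqrt (hv₀ : ContDiff ℝ 4 v₀) (hbdd : ∃ M, ∀ s, |v₀ s| ≤ M)
    (hslope : deriv v₀ ξ ≠ 0) (hmin : ∀ η, deriv v₀ ξ ≤ deriv v₀ η)
    (h3rd : 0 < deriv (deriv (deriv v₀)) ξ) (hτ : τ = -1 / deriv v₀ ξ)
    (hκ : κ = τ ^ 4 * deriv (deriv (deriv v₀)) ξ / 6) (a b : ℝ) :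
    (fun ν => coleHopf v₀ (ξ + v₀ ξ * (τ + b * √(κ * ν)) + a * (κ * ν ^ 3) ^ ((1 : ℝ) / 4))
      (τ + b * √(κ * ν)) ν - v₀ ξ - (ν / κ) ^ ((1 : ℝ) / 4) * pearceyU a b) =O[𝓝[>] 0]
        fun ν => √ν := by
  have hτ0 : τ ≠ 0 := hτ ▸ div_ne_zero (by norm_num) hslope
  have hκ0 : 0 < κ := hκ ▸ by positivity
  have hε_sq : (fun ν => ((ν / κ) ^ ((1 : ℝ) / 4)) ^ 2) =O[𝓝[>] 0] fun ν => √ν := by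
    refine ((isBigO_refl _ _).const_mul_left (√κ)⁻¹).congr' ?_ .rfl
    filter_upwards [self_mem_nhdsWithin] with ν (hν : 0 < ν)
    rw [rpow_one_fourth_sq (by positivity), Real.sqrt_div' ν hκ0.le, div_eq_inv_mul]
  have hexpansion := (isBigO_coleHopf_sub_pearceyU hv₀ hbdd hslope hmin h3rd hτ hκ a b).mono
    (nhdsGT_le_nhdsNE 0)
  refine ((hexpansion.comp_tendsto
    (tendsto_div_rpow_nhdsGT_zero hκ0 (by norm_num))).trans hε_sq).congr' ?_ .rfl
  filter_upwards [self_mem_nhdsWithin] with ν (hν : 0 < ν)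
  obtain ⟨ε, hε, rfl⟩ : ∃ ε > 0, ν = κ * ε ^ 4 :=
    ⟨(ν / κ) ^ ((1 : ℝ) / 4), by positivity, by
      rw [rpow_one_fourth_pow_four (by positivity)]; field_simp⟩
  have hε_eq : (κ * ε ^ 4 / κ) ^ ((1 : ℝ) / 4) = ε := by
    rw [mul_div_cancel_left₀ _ hκ0.ne', pow_four_rpow_one_fourth hε.le]
  have hsqrt : √(κ * (κ * ε ^ 4)) = κ * ε ^ 2 := by
    rw [show κ * (κ * ε ^ 4) = (κ * ε ^ 2) ^ 2 by ring, Real.sqrt_sq (by positivity)]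
  have hcube : (κ * (κ * ε ^ 4) ^ 3) ^ ((1 : ℝ) / 4) = κ * ε ^ 3 := by
    rw [show κ * (κ * ε ^ 4) ^ 3 = (κ * ε ^ 3) ^ 4 by ring,
      pow_four_rpow_one_fourth (by positivity)]
  simp only [Function.comp_apply, hε_eq, hsqrt, hcube, mul_assoc]

end ColeHopf

theorem burgers_pearcey_expansion_general
    (v₀ : ℝ → ℝ) (hv₀ : ContDiff ℝ 4 v₀)
    (hbdd : ∃ M : ℝ, ∀ s : ℝ, |v₀ s| ≤ M)
    (ξc : ℝ)
    (hslope : deriv v₀ ξc ≠ 0)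
    (hmin : ∀ ξ : ℝ, deriv v₀ ξc ≤ deriv v₀ ξ)
    (h3rd : 0 < deriv (deriv (deriv v₀)) ξc)
    (tc vc xc κ : ℝ)
    (htc : tc = -1 / deriv v₀ ξc)
    (hvc : vc = v₀ ξc)
    (hxc : xc = vc * tc + ξc)
    (hκ : κ = tc ^ 4 * deriv (deriv (deriv v₀)) ξc / 6)
    (G : ℝ → ℝ → ℝ → ℝ)
    (hG : ∀ η x t : ℝ, G η x t = (∫ s in (0 : ℝ)..η, v₀ s) + (x - η) ^ 2 / (2 * t))
    (v : ℝ → ℝ → ℝ → ℝ)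
    (hv : ∀ x t ν : ℝ, v x t ν =
      (∫ η : ℝ, ((x - η) / t) * Real.exp (-(G η x t) / (2 * ν))) /
        (∫ η : ℝ, Real.exp (-(G η x t) / (2 * ν))))
    (a b : ℝ) :
    ∃ C > (0 : ℝ), ∃ ν₀ > (0 : ℝ), ∀ ν : ℝ, 0 < ν → ν < ν₀ →
      |v (xc + vc * b * Real.sqrt (κ * ν) + a * (κ * ν ^ 3) ^ ((1 : ℝ) / 4))
          (tc + b * Real.sqrt (κ * ν)) ν
        - vc - (ν / κ) ^ ((1 : ℝ) / 4) * pearceyU a b| ≤ C * Real.sqrt ν := by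
  obtain ⟨C, hC, r, hr, hbound⟩ := exists_pos_forall_abs_le_of_isBigO_nhdsGT
    (isBigO_coleHopf_sub_pearceyU_sqrt hv₀ hbdd hslope hmin h3rd htc hκ a b) Real.sqrt_nonneg
  have hv_eq (x t ν : ℝ) : v x t ν = coleHopf v₀ x t ν := by
    simp only [hv, hG, coleHopf, gibbsMean, coleHopfPhase, neg_div]
  have hx (s y : ℝ) : xc + vc * b * s + y = ξc + v₀ ξc * (tc + b * s) + y := by
    rw [hxc, hvc]
    ring
  refine ⟨C, hC, r, hr, fun ν hν hνr => ?_⟩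
  rw [hv_eq, hx, hvc]
  exact hbound ν hν hνr

/-- Near a generic gradient catastrophe of the Hopf equation, the Cole–Hopf
solution of the Burgers equation admits the Pearcey expansion
`v = v_c + (ν/κ)^{1/4} U((x̄ - v_c t̄)/(κν³)^{1/4}, t̄/(κν)^{1/2}) + O(ν^{1/2})`. -/
theorem burgers_pearcey_expansion
    (v₀ : ℝ → ℝ) (hsm : ContDiff ℝ (⊤ : ℕ∞) v₀)
    (hbdd : ∃ M : ℝ, ∀ s : ℝ, |v₀ s| ≤ M)
    (hbddderiv : ∀ n : ℕ, ∃ M : ℝ, ∀ s : ℝ, |iteratedDeriv n v₀ s| ≤ M)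
    (ξc : ℝ)
    (hneg : deriv v₀ ξc < 0)
    (hmin : ∀ ξ : ℝ, ξ ≠ ξc → deriv v₀ ξc < deriv v₀ ξ)
    (h2nd : deriv (deriv v₀) ξc = 0)
    (h3rd : 0 < deriv (deriv (deriv v₀)) ξc)
    (tc vc xc κ : ℝ)
    (htc : tc = -1 / deriv v₀ ξc)
    (hvc : vc = v₀ ξc)
    (hxc : xc = vc * tc + ξc)
    (hκ : κ = tc ^ 4 * deriv (deriv (deriv v₀)) ξc / 6)
    (G : ℝ → ℝ → ℝ → ℝ)
    (hG : ∀ η x t : ℝ, G η x t = (∫ s in (0 : ℝ)..η, v₀ s) + (x - η) ^ 2 / (2 * t))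
    (v : ℝ → ℝ → ℝ → ℝ)
    (hv : ∀ x t ν : ℝ, v x t ν =
      (∫ η : ℝ, ((x - η) / t) * Real.exp (-(G η x t) / (2 * ν))) /
        (∫ η : ℝ, Real.exp (-(G η x t) / (2 * ν))))
    (a b : ℝ) :
    ∃ C > (0 : ℝ), ∃ ν₀ > (0 : ℝ), ∀ ν : ℝ, 0 < ν → ν < ν₀ →
      |v (xc + vc * b * Real.sqrt (κ * ν) + a * (κ * ν ^ 3) ^ ((1 : ℝ) / 4))
          (tc + b * Real.sqrt (κ * ν)) ν
        - vc - (ν / κ) ^ ((1 : ℝ) / 4) * pearceyU a b| ≤ C * Real.sqrt ν := by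
  have hmin_le (ξ : ℝ) : deriv v₀ ξc ≤ deriv v₀ ξ :=
    (eq_or_ne ξ ξc).elim (fun h => h ▸ le_rfl) fun h => (hmin ξ h).le
  exact burgers_pearcey_expansion_general v₀ (contDiff_infty.mp hsm 4) hbdd ξc hneg.ne hmin_le
    h3rd tc vc xc κ htc hvc hxc hκ G hG v hv a b
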